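/- Suppose a is contained in the Jacobson radical of R and M is an a-relative generalized Cohen-Macaulay R-module such that c := cd(a,M) = ara(a,M). If x_1,...,x_c is an a-relative system of parameters of M, then x_1,...,x_c is an unconditioned a-filter regular sequence on M. -/

import Mathlib

/-!
Formalization of a statement from "A theory of relative generalized Cohen-Macaulay modules"
by Divaani-Aazar, Ghanbari Doust, Tousi and Zakeri.

Throughout, `R` is a commutative Noetherian ring and `M` a finitely generated `R`-module.
Conventions used below:
* `locH I i M` is the local cohomology module `H^i_I(M)` (Mathlib's `localCohomology`).
* Conditions `cd(I,M) = c`, `ara(I,M) = n`, `f_I(M) = f`, `grade(I,M) = r` are expressed by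
  the predicates `IsCd`, `IsAra`, `IsFinDim`, `IsGrade`.
* Sequences are given as functions `Fin r → R`; `pSpan M x i = ⟨x_0,…,x_{i-1}⟩M`.
* Koszul (co)homology is defined via the explicit (co)chain complex on the `p`-element
  subsets of `{0,…,n-1}`, and the canonical map `λ^i` into local cohomology is the structure
  map (at exponent 1) into the direct limit of Koszul cohomologies of powers of the sequence,
  which is the realization of `H^i_{⟨x⟩}(M)` used in the paper (2.1(iv)).
-/

open CategoryTheory

noncomputable section

variable {R : Type} [CommRing R]

/-! ### Sequences: prefix spans, weak sequences, filter regular sequences, d-sequences -/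

/-- `pSpan M x i` is the submodule `⟨x_0, …, x_{i-1}⟩M` of `M`. -/
def pSpan (M : Type) [AddCommGroup M] [Module R M] {r : ℕ} (x : Fin r → R) (i : Fin r) :
    Submodule R M :=
  Ideal.span (x '' {j | j < i}) • (⊤ : Submodule R M)

/-- `x_1, …, x_r` is an `I`-weak sequence on `M`:
`(⟨x_1,…,x_{i-1}⟩M :_M x_i) ⊆ (⟨x_1,…,x_{i-1}⟩M :_M I)` for all `i`. -/
def IsWeakSeq (I : Ideal R) (M : Type) [AddCommGroup M] [Module R M] {r : ℕ}
    (x : Fin r → R) : Prop :=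
  ∀ i : Fin r, ∀ m : M, x i • m ∈ pSpan M x i → ∀ a ∈ I, a • m ∈ pSpan M x i

/-- `x_1, …, x_r` is an `I`-filter regular sequence on `M`:
`(⟨x_1,…,x_{i-1}⟩M :_M x_i) ⊆ ⋃ₜ (⟨x_1,…,x_{i-1}⟩M :_M I^t)` for all `i`. -/
def IsFilterRegSeq (I : Ideal R) (M : Type) [AddCommGroup M] [Module R M] {r : ℕ}
    (x : Fin r → R) : Prop :=
  ∀ i : Fin r, ∀ m : M, x i • m ∈ pSpan M x i →
    ∃ t : ℕ, ∀ a ∈ I ^ t, a • m ∈ pSpan M x i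

/-- An unconditioned `I`-filter regular sequence: filter regular in any order. -/
def IsUncondFilterRegSeq (I : Ideal R) (M : Type) [AddCommGroup M] [Module R M] {r : ℕ}
    (x : Fin r → R) : Prop :=
  ∀ σ : Equiv.Perm (Fin r), IsFilterRegSeq I M (x ∘ σ)

/-- An unconditioned `I`-weak sequence: all positive powers, in any order, form an
`I`-weak sequence. -/
def IsUncondWeakSeq (I : Ideal R) (M : Type) [AddCommGroup M] [Module R M] {r : ℕ}
    (x : Fin r → R) : Prop :=
  ∀ σ : Equiv.Perm (Fin r), ∀ α : Fin r → ℕ, (∀ k, 0 < α k) →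
    IsWeakSeq I M fun k => x (σ k) ^ α k

/-- `x_1, …, x_r` is a d-sequence on `M`:
`(⟨x_1,…,x_{i-1}⟩M :_M x_i x_j) = (⟨x_1,…,x_{i-1}⟩M :_M x_j)` for all `i ≤ j`. -/
def IsDSeq (M : Type) [AddCommGroup M] [Module R M] {r : ℕ} (x : Fin r → R) : Prop :=
  ∀ i j : Fin r, i ≤ j → ∀ m : M,
    ((x i * x j) • m ∈ pSpan M x i ↔ x j • m ∈ pSpan M x i)

/-- An u.s.d-sequence on `M`: all positive powers, in any order, form a d-sequence. -/
def IsUSDSeq (M : Type) [AddCommGroup M] [Module R M] {r : ℕ} (x : Fin r → R) : Prop :=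
  ∀ σ : Equiv.Perm (Fin r), ∀ α : Fin r → ℕ, (∀ k, 0 < α k) →
    IsDSeq M fun k => x (σ k) ^ α k

/-! ### Local cohomology, cohomological dimension, arithmetic rank -/

/-- The `i`-th local cohomology module `H^i_I(M)`. -/
abbrev locH (I : Ideal R) (i : ℕ) (M : Type) [AddCommGroup M] [Module R M] : ModuleCat R :=
  (localCohomology I i).obj (ModuleCat.of R M)

/-- `cd(I, M) = c`: the cohomological dimension of `I` on `M` equals `c`, i.e.
`H^c_I(M) ≠ 0` and `H^i_I(M) = 0` for all `i > c`. -/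
def IsCd (I : Ideal R) (M : Type) [AddCommGroup M] [Module R M] (c : ℕ) : Prop :=
  Nontrivial (locH I c M) ∧ ∀ i : ℕ, c < i → Subsingleton (locH I i M)

/-- `f_I(M) = f`: the `I`-finiteness dimension of `M` equals `f`, i.e. `f` is the least
integer such that `H^f_I(M)` is not finitely generated. -/
def IsFinDim (I : Ideal R) (M : Type) [AddCommGroup M] [Module R M] (f : ℕ) : Prop :=
  (∀ i : ℕ, i < f → Module.Finite R (locH I i M)) ∧ ¬ Module.Finite R (locH I f M)

/-- `M` is `I`-relative generalized Cohen-Macaulay: `cd(I,M) ≤ 0` or `cd(I,M) = f_I(M)`. -/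
def IsRelGCM (I : Ideal R) (M : Type) [AddCommGroup M] [Module R M] : Prop :=
  (∀ i : ℕ, 0 < i → Subsingleton (locH I i M)) ∨
    ∃ c : ℕ, IsCd I M c ∧ IsFinDim I M c

/-- `ara(I, M) = n`: the arithmetic rank of `I` with respect to `M` equals `n`, i.e. `n` is the
least integer such that there are `x_1, …, x_n ∈ R` with
`Rad(⟨x_1,…,x_n⟩ + Ann M) = Rad(I + Ann M)`. -/
def IsAra (I : Ideal R) (M : Type) [AddCommGroup M] [Module R M] (n : ℕ) : Prop :=
  IsLeast {k : ℕ | ∃ x : Fin k → R,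
    (Ideal.span (Set.range x) + Module.annihilator R M).radical
      = (I + Module.annihilator R M).radical} n

/-- `x_1, …, x_c` is an `I`-relative system of parameters of `M` (where `c = cd(I,M)`):
the `x_i` lie in `I` and `Rad(⟨x_1,…,x_c⟩ + Ann M) = Rad(I + Ann M)`. -/
def IsRsop (I : Ideal R) (M : Type) [AddCommGroup M] [Module R M] {c : ℕ}
    (x : Fin c → R) : Prop :=
  (∀ j, x j ∈ I) ∧
    (Ideal.span (Set.range x) + Module.annihilator R M).radical
      = (I + Module.annihilator R M).radical

/-!
The finiteness of the modules `H^i_I(M)` for `i < r` matters only because a finitely generated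
local cohomology module is annihilated by a power of `I`. By the long exact sequence this weaker
property passes, for `i < r - 1`, to `M / x₁M` as soon as `(0 :_M x₁)` is `I`-power torsion. An
induction thus reduces filter regularity to the claim that `x₁` lies in no associated prime `p` of
`M` with `I ⊄ p`.

To prove the claim, divide out `Γ_I(M)` and choose `y ∈ I` regular on `M`. The minimal primes of
`p + (y)` are associated primes of `M / yM`, and since a power of `I` annihilates `H^1_I(M)`, they
do not contain `I`. Iterating gives, for every minimal prime `q` of `I + p`, a chain of primes from
`p` to `q` of length greater than `r - 1`. Such a `q` exists because `I` lies in the Jacobson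
radical. If `p` contained `x₁`, then `q` would be minimal over `p + (x₂, …, x_r)`, which contradicts
Krull's height theorem in `R / p`.
-/

section PowTorsion

variable {A : Type*} [CommRing A] (I : Ideal A) (M : Type*) [AddCommGroup M] [Module A M]

/-- The `I`-power torsion submodule `Γ_I(M)` of `M`. -/
def powTorsion : Submodule A M :=
  ⨆ n : ℕ, Submodule.torsionBySet A M (I ^ n : Ideal A)

variable {I M}

lemma monotone_torsionBySet_pow :
    Monotone fun n : ℕ => Submodule.torsionBySet A M (I ^ n : Ideal A) := fun _ _ h =>
  Submodule.torsionBySet_le_torsionBySet_of_subset (Ideal.pow_le_pow_right h)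

lemma mem_powTorsion_iff {m : M} : m ∈ powTorsion I M ↔ ∃ n : ℕ, ∀ a ∈ I ^ n, a • m = 0 := by
  simp [powTorsion, Submodule.mem_iSup_of_directed _ monotone_torsionBySet_pow.directed_le]

lemma exists_powTorsion_eq [IsNoetherian A M] :
    ∃ n : ℕ, powTorsion I M = Submodule.torsionBySet A M (I ^ n : Ideal A) := by
  let T : ℕ →o Submodule A M := ⟨_, monotone_torsionBySet_pow (I := I)⟩
  obtain ⟨n, hn⟩ := monotone_stabilizes_iff_noetherian.mpr ‹_› T
  refine ⟨n, le_antisymm (iSup_le fun k => ?_) (le_iSup T n)⟩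
  exact (T.mono (le_max_left k n)).trans (hn _ (le_max_right k n)).ge

lemma powTorsion_quotient_powTorsion [IsNoetherian A M] :
    powTorsion I (M ⧸ powTorsion I M) = ⊥ := by
  obtain ⟨n, hn⟩ := exists_powTorsion_eq (I := I) (M := M)
  refine eq_bot_iff.mpr fun x hx => ?_
  obtain ⟨m, rfl⟩ := Submodule.mkQ_surjective _ x
  obtain ⟨k, hk⟩ := mem_powTorsion_iff.mp hx
  have kills : I ^ n * I ^ k ≤ LinearMap.ker (LinearMap.toSpanSingleton A M m) := by
    refine Ideal.mul_le.mpr fun a ha b hb => ?_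
    have hbm : b • m ∈ powTorsion I M :=
      (Submodule.Quotient.mk_eq_zero _).mp (hk b hb)
    rw [hn] at hbm
    rw [LinearMap.mem_ker, LinearMap.toSpanSingleton_apply, mul_smul]
    exact (Submodule.mem_torsionBySet_iff _ _).mp hbm ⟨a, ha⟩
  refine (Submodule.Quotient.mk_eq_zero _).mpr (mem_powTorsion_iff.mpr ⟨n + k, fun a ha => ?_⟩)
  exact kills (pow_add I n k ▸ ha)

lemma le_radical_annihilator_of_powTorsion_eq_top [IsNoetherian A M]
    (h : powTorsion I M = ⊤) : I ≤ (Module.annihilator A M).radical := by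
  obtain ⟨n, hn⟩ := exists_powTorsion_eq (I := I) (M := M)
  refine fun a ha => ⟨n, Module.mem_annihilator.mpr fun m => ?_⟩
  have hm : m ∈ Submodule.torsionBySet A M (I ^ n : Ideal A) := hn ▸ h ▸ Submodule.mem_top
  exact (Submodule.mem_torsionBySet_iff _ _).mp hm ⟨a ^ n, Ideal.pow_mem_pow ha n⟩

lemma le_radical_annihilator_powTorsion [IsNoetherian A M] :
    I ≤ (Module.annihilator A (powTorsion I M)).radical := by
  refine le_radical_annihilator_of_powTorsion_eq_top (eq_top_iff.mpr fun m _ => ?_)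
  obtain ⟨n, hn⟩ := mem_powTorsion_iff.mp m.2
  exact mem_powTorsion_iff.mpr ⟨n, fun a ha => Subtype.ext (hn a ha)⟩

end PowTorsion

section ExtComparison

open Opposite

universe v w

variable {A : Type*} [CommRing A]

section Homology

variable {ι : Type*} {c : ComplexShape ι} {K L : HomologicalComplex (ModuleCat.{v} A) c} {i j k : ι}

variable (K) in
/-- The kernel of an outgoing differential of a complex of modules, mapped to the object of
cycles of the complex. -/
def kerToCycles (hij : c.next i = j) : LinearMap.ker (K.d i j).hom →ₗ[A] K.cycles i :=
  (K.liftCycles (ModuleCat.ofHom (LinearMap.ker (K.d i j).hom).subtype) j hij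
    (by ext z; exact z.2)).hom

variable (K) in
/-- The map sending a cocycle of a complex of modules to its class in homology. -/
def cocycleClass (hij : c.next i = j) : LinearMap.ker (K.d i j).hom →ₗ[A] K.homology i :=
  (K.homologyπ i).hom ∘ₗ kerToCycles K hij

lemma iCycles_kerToCycles (hij : c.next i = j) (z : LinearMap.ker (K.d i j).hom) :
    K.iCycles i (kerToCycles K hij z) = z :=
  ConcreteCategory.congr_hom (K.liftCycles_i
    (ModuleCat.ofHom (LinearMap.ker (K.d i j).hom).subtype) j hij (by ext z; exact z.2)) z

lemma iCycles_injective (i : ι) : Function.Injective (K.iCycles i) :=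
  (ModuleCat.mono_iff_injective _).mp inferInstance

lemma kerToCycles_surjective (hij : c.next i = j) :
    Function.Surjective (kerToCycles K hij) := fun ζ =>
  ⟨⟨K.iCycles i ζ, by simp [← ModuleCat.comp_apply]⟩,
    iCycles_injective i (iCycles_kerToCycles hij _)⟩

lemma cocycleClass_surjective (hij : c.next i = j) : Function.Surjective (cocycleClass K hij) :=
  ((ModuleCat.epi_iff_surjective (K.homologyπ i)).mp inferInstance).comp
    (kerToCycles_surjective hij)

lemma cocycleClass_eq_zero_iff (hij : c.next i = j) (hk : c.prev i = k)
    (z : LinearMap.ker (K.d i j).hom) :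
    cocycleClass K hij z = 0 ↔ ∃ w : K.X k, K.d k i w = z := by
  have exact : (ShortComplex.mk (K.toCycles k i) (K.homologyπ i) (by simp)).Exact :=
    ShortComplex.exact_of_g_is_cokernel _ (K.homologyIsCokernel k i hk)
  refine ((ShortComplex.ShortExact.moduleCat_exact_iff_function_exact _).mp exact _).trans
    (exists_congr fun w => ?_)
  rw [← (iCycles_injective i).eq_iff, iCycles_kerToCycles]
  simp [← ModuleCat.comp_apply]

lemma homologyMap_cocycleClass (φ : K ⟶ L) (hij : c.next i = j)
    {z : LinearMap.ker (K.d i j).hom} {z' : LinearMap.ker (L.d i j).hom} (hz : φ.f i z = z'.1) :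
    HomologicalComplex.homologyMap φ i (cocycleClass K hij z) = cocycleClass L hij z' := by
  have cycles : HomologicalComplex.cyclesMap φ i (kerToCycles K hij z) = kerToCycles L hij z' := by
    apply iCycles_injective i
    rw [iCycles_kerToCycles, ← hz, ← iCycles_kerToCycles hij z, ← ModuleCat.comp_apply,
      HomologicalComplex.cyclesMap_i, ModuleCat.comp_apply]
  exact (ConcreteCategory.congr_hom (HomologicalComplex.homologyπ_naturality φ i)
    (kerToCycles K hij z)).trans (congrArg (L.homologyπ i) cycles)

end Homology

section Comparison

universe t

variable {C : Type t} [Category.{v} C] [Abelian C]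

lemma extMk_eq_zero_iff_exists_prev [HasExt.{w} C] {X Y : C} (P : ProjectiveResolution X)
    {n m : ℕ} (f : P.complex.X n ⟶ Y) (hm : n + 1 = m) (hf : P.complex.d m n ≫ f = 0) :
    P.extMk f m hm hf = 0 ↔
      ∃ g : P.complex.X ((ComplexShape.up ℕ).prev n) ⟶ Y, P.complex.d n _ ≫ g = f := by
  cases n with
  | succ n => exact P.extMk_eq_zero_iff f m hm hf _ (by simp)
  | zero =>
    rw [← P.extEquivCohomologyClass.apply_eq_iff_eq, P.extEquivCohomologyClass_extMk,
      P.extEquivCohomologyClass_zero, CochainComplex.HomComplex.CohomologyClass.mk_eq_zero_iff,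
      CochainComplex.HomComplex.Cocycle.toSingleMk_mem_coboundaries_iff _ _ _ _ _ 1 (by simp)]
    have d_zero_one : P.cochainComplex.d (-(0 : ℕ)) 1 = 0 :=
      (P.cochainComplex.isZero_of_isStrictlyLE 0 1).eq_of_tgt _ _
    rw [d_zero_one]
    simpa [eq_comm (b := f)] using eq_comm.trans (Preadditive.IsIso.comp_left_eq_zero _ f)

variable [Linear A C]

/-- Precomposition with a morphism of chain complexes, as a morphism between the complexes of
modules `Hom(-, Y)`. -/
def linearYonedaObjMap {P Q : ChainComplex C ℕ} (φ : P ⟶ Q) (Y : C) :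
    Q.linearYonedaObj A Y ⟶ P.linearYonedaObj A Y :=
  (HomologicalComplex.unopFunctor _ _).map
    ((((linearYoneda A C).obj Y).rightOp.mapHomologicalComplex _).map φ).op

lemma unop_conj_eq {D : Type*} [Category* D] {a b u v : Dᵒᵖ} {k l : D} (α : a ≅ u) (β : b ≅ v)
    {m : u ⟶ v} (γ : u ≅ op k) (δ : v ≅ op l) {h : l ⟶ k} (comm : m ≫ δ.hom = γ.hom ≫ h.op) :
    (α.hom ≫ m ≫ β.inv).unop = (β.unop.symm ≪≫ δ.unop.symm).hom ≫ h ≫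
      (α.unop.symm ≪≫ γ.unop.symm).inv := by
  obtain rfl : m = γ.hom ≫ h.op ≫ δ.inv := by rw [← reassoc_of% comm]; simp
  simp

lemma ext_map_app_eq [EnoughProjectives C] {X X' : C} (f : X' ⟶ X) {P : ProjectiveResolution X}
    {P' : ProjectiveResolution X'} (φ : ProjectiveResolution.Hom P' P f) (n : ℕ) (Y : C) :
    ((Ext A C n).map f.op).app Y = (P.isoExt n Y).hom ≫
      HomologicalComplex.homologyMap (linearYonedaObjMap φ.hom Y) n ≫ (P'.isoExt n Y).inv :=
  (congrArg Quiver.Hom.unop (Functor.leftDerived_map_eq ((linearYoneda A C).obj Y).rightOp n f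
    φ.hom φ.hom_comp_π)).trans
    (unop_conj_eq _ _ _ _ (HomologicalComplex.homologyOp_hom_naturality
      (linearYonedaObjMap φ.hom Y) n))

variable {X X' Y : C} (P : ProjectiveResolution X) (n : ℕ)

/-- The map sending a cocycle of `Hom(P, Y)` to its class in the `Ext`-group defined by the
derived category. -/
def abelianExtClass [HasExt.{w} C] :
    LinearMap.ker ((P.complex.linearYonedaObj A Y).d n (n + 1)).hom →ₗ[A]
    Abelian.Ext.{w} X Y n where
  toFun z := P.extMk z.1 (n + 1) rfl z.2
  map_add' z z' := (P.add_extMk _ _ _ _ z.2 z'.2).symm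
  map_smul' a z := by
    rw [RingHom.id_apply, Abelian.Ext.smul_eq_comp_mk₀]
    refine Eq.trans ?_ (P.extMk_comp_mk₀ _ _ rfl z.2 (a • 𝟙 Y)).symm
    congr 1
    exact ((Linear.comp_smul _ _ _ _ _ _).trans (congrArg (a • ·) (Category.comp_id _))).symm

/-- The map sending a cocycle of `Hom(P, Y)` to its class in the module `Ext` defined by left
derived functors. -/
def derivedExtClass [EnoughProjectives C] :
    LinearMap.ker ((P.complex.linearYonedaObj A Y).d n (n + 1)).hom →ₗ[A]
    ((Ext A C n).obj (op X)).obj Y :=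
  (P.isoExt n Y).inv.hom ∘ₗ cocycleClass _ (by simp)

lemma abelianExtClass_surjective [HasExt.{w} C] :
    Function.Surjective (abelianExtClass (A := A) (Y := Y) P n) := fun e =>
  let ⟨f, hf, hfe⟩ := P.extMk_surjective e (n + 1) rfl
  ⟨⟨f, hf⟩, hfe⟩

lemma derivedExtClass_surjective [EnoughProjectives C] :
    Function.Surjective (derivedExtClass (A := A) (Y := Y) P n) :=
  (P.isoExt n Y).symm.toLinearEquiv.surjective.comp (cocycleClass_surjective _)

lemma ext_map_derivedExtClass [EnoughProjectives C] {P : ProjectiveResolution X}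
    {P' : ProjectiveResolution X'} {f : X' ⟶ X} (φ : ProjectiveResolution.Hom P' P f)
    {z : LinearMap.ker ((P.complex.linearYonedaObj A Y).d n (n + 1)).hom}
    {z' : LinearMap.ker ((P'.complex.linearYonedaObj A Y).d n (n + 1)).hom}
    (hz : (linearYonedaObjMap φ.hom Y).f n z = z'.1) :
    ((Ext A C n).map f.op).app Y (derivedExtClass P n z) = derivedExtClass P' n z' := by
  rw [ext_map_app_eq f φ]
  refine congrArg (P'.isoExt n Y).inv (Eq.trans (congrArg _ ?_)
    (homologyMap_cocycleClass (linearYonedaObjMap φ.hom Y) _ hz))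
  exact (P.isoExt n Y).symm.toLinearEquiv.symm_apply_apply _

variable [EnoughProjectives C] [HasExt.{w} C]

lemma ker_abelianExtClass_eq_ker_derivedExtClass :
    LinearMap.ker (abelianExtClass (A := A) (Y := Y) P n) =
      LinearMap.ker (derivedExtClass P n) := by
  ext z
  have derived : derivedExtClass P n z = 0 ↔ cocycleClass _ (by simp) z = 0 :=
    (P.isoExt n Y).symm.toLinearEquiv.map_eq_zero_iff
  exact (extMk_eq_zero_iff_exists_prev P _ rfl z.2).trans
    (derived.trans (cocycleClass_eq_zero_iff _ rfl z)).symm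

/-- The comparison between the two constructions of `Ext`, through a projective resolution of the
first argument. `localCohomology` is built from the second one, while the long exact sequences are
available for the first. -/
def extLinearEquiv : Abelian.Ext.{w} X Y n ≃ₗ[A] ((Ext A C n).obj (op X)).obj Y :=
  (LinearMap.quotKerEquivOfSurjective _ (abelianExtClass_surjective P n)).symm ≪≫ₗ
    Submodule.quotEquivOfEq _ _ (ker_abelianExtClass_eq_ker_derivedExtClass P n) ≪≫ₗ
    LinearMap.quotKerEquivOfSurjective _ (derivedExtClass_surjective P n)

lemma extLinearEquiv_abelianExtClass
    (z : LinearMap.ker ((P.complex.linearYonedaObj A Y).d n (n + 1)).hom) :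
    extLinearEquiv P n (abelianExtClass P n z) = derivedExtClass P n z := by
  have quot : (LinearMap.quotKerEquivOfSurjective _ (abelianExtClass_surjective P n)).symm
      (abelianExtClass P n z) = Submodule.Quotient.mk z := by
    rw [LinearEquiv.symm_apply_eq]; rfl
  simp only [extLinearEquiv, LinearEquiv.trans_apply, quot]
  rfl

lemma extLinearEquiv_mk₀_comp (P' : ProjectiveResolution X') (f : X' ⟶ X)
    (e : Abelian.Ext.{w} X Y n) :
    extLinearEquiv P' n ((Abelian.Ext.mk₀ f).comp e (zero_add n)) =
      ((Ext A C n).map f.op).app Y (extLinearEquiv P n e) := by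
  obtain ⟨⟨(z : P.complex.X n ⟶ Y), (hz : P.complex.d (n + 1) n ≫ z = 0)⟩, rfl⟩ :=
    abelianExtClass_surjective (A := A) P n e
  let φ : ProjectiveResolution.Hom P' P f :=
    ⟨ProjectiveResolution.lift f P' P, by simpa using ProjectiveResolution.lift_commutes_zero ..⟩
  have hφz : P'.complex.d (n + 1) n ≫ φ.hom.f n ≫ z = 0 := by
    rw [← φ.hom.comm_assoc, hz, Limits.comp_zero]
  have abelian : (Abelian.Ext.mk₀ f).comp (abelianExtClass (A := A) P n ⟨z, hz⟩) (zero_add n) =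
      abelianExtClass (A := A) P' n ⟨φ.hom.f n ≫ z, hφz⟩ :=
    ProjectiveResolution.mk₀_comp_extMk z (n + 1) rfl hz φ
  have derived : ((Ext A C n).map f.op).app Y (derivedExtClass P n ⟨z, hz⟩) =
      derivedExtClass (A := A) P' n ⟨φ.hom.f n ≫ z, hφz⟩ :=
    ext_map_derivedExtClass n φ rfl
  exact (congrArg _ abelian).trans ((extLinearEquiv_abelianExtClass P' n _).trans
    (derived.symm.trans (congrArg _ (extLinearEquiv_abelianExtClass P n _).symm)))

end Comparison

end ExtComparison

section LocalCohomology

open Opposite Limits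

universe u

variable {A : Type u} [CommRing A] (I : Ideal A) (i : ℕ)

/-- The projection `A ⧸ I ^ s ⟶ A ⧸ I ^ t` for `t ≤ s`, as a morphism of modules. -/
abbrev quotientPowProj {s t : ℕ} (hts : t ≤ s) :
    ModuleCat.of A (A ⧸ I ^ s) ⟶ ModuleCat.of A (A ⧸ I ^ t) :=
  ModuleCat.ofHom (Submodule.factor (Ideal.pow_le_pow_right hts))

/-- The canonical map from `Ext^i(A ⧸ I ^ t, M)` to the `i`-th local cohomology module of `M`. -/
def toLocalCohomology (t : ℕ) (M : ModuleCat.{u} A) :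
    Abelian.Ext (ModuleCat.of A (A ⧸ I ^ t)) M i →ₗ[A] (localCohomology I i).obj M :=
  ((colimit.ι (localCohomology.diagram (localCohomology.idealPowersDiagram I) i)
    (op (op t))).app M).hom ∘ₗ (extLinearEquiv (projectiveResolution _) i).toLinearMap

variable {I i}

/-- The local cohomology module of `M` is the colimit of the modules `Ext^i(A ⧸ I ^ t, M)`. -/
def isColimitLocalCohomology (M : ModuleCat.{u} A) :
    IsColimit (((evaluation _ _).obj M).mapCocone
      (colimit.cocone (localCohomology.diagram (localCohomology.idealPowersDiagram I) i))) :=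
  isColimitOfPreserves _ (colimit.isColimit _)

instance : PreservesFilteredColimitsOfSize.{0, 0} (forget (ModuleCat.{u} A)) :=
  preservesFilteredColimitsOfSize_shrink.{0, u, 0, u} _

lemma exists_toLocalCohomology_eq {M : ModuleCat.{u} A} (x : (localCohomology I i).obj M) :
    ∃ t e, toLocalCohomology I i t M e = x := by
  have : IsFiltered (ℕᵒᵖ)ᵒᵖ := inferInstance
  obtain ⟨t, e, rfl⟩ := Concrete.isColimit_exists_rep _ (isColimitLocalCohomology M) x
  obtain ⟨e', rfl⟩ :=
    (extLinearEquiv (A := A) (projectiveResolution (ModuleCat.of A (A ⧸ I ^ t.unop.unop)))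
      i).surjective e
  exact ⟨t.unop.unop, e', rfl⟩

lemma toLocalCohomology_mk₀_comp {M : ModuleCat.{u} A} {s t : ℕ} (hts : t ≤ s)
    (e : Abelian.Ext (ModuleCat.of A (A ⧸ I ^ t)) M i) :
    toLocalCohomology I i s M ((Abelian.Ext.mk₀ (quotientPowProj I hts)).comp e (zero_add i)) =
      toLocalCohomology I i t M e := by
  let D := localCohomology.diagram (localCohomology.idealPowersDiagram I) i
  have ext_comp := extLinearEquiv_mk₀_comp (A := A) (projectiveResolution _) i
    (projectiveResolution _) (quotientPowProj I hts) e
  have colimit_comp := congr_app (colimit.w D (homOfLE hts).op.op) M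
  exact (congrArg ((colimit.ι D (op (op s))).app M).hom ext_comp).trans
    (ConcreteCategory.congr_hom colimit_comp (extLinearEquiv (projectiveResolution _) i e))

lemma toLocalCohomology_eq_zero_iff {M : ModuleCat.{u} A} {t : ℕ}
    (e : Abelian.Ext (ModuleCat.of A (A ⧸ I ^ t)) M i) :
    toLocalCohomology I i t M e = 0 ↔
      ∃ (s : ℕ) (hts : t ≤ s),
        (Abelian.Ext.mk₀ (quotientPowProj I hts)).comp e (zero_add i) = 0 := by
  refine ⟨fun h => ?_, fun ⟨s, hts, h⟩ => ?_⟩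
  · let D := localCohomology.diagram (localCohomology.idealPowersDiagram I) i
    let e' := extLinearEquiv (A := A) (projectiveResolution _) i e
    have : IsFiltered (ℕᵒᵖ)ᵒᵖ := inferInstance
    let c := ((evaluation _ _).obj M).mapCocone (colimit.cocone D)
    have h' : c.ι.app (op (op t)) e' = c.ι.app (op (op t)) 0 :=
      h.trans (map_zero (c.ι.app (op (op t))).hom).symm
    obtain ⟨s, g, hg⟩ := (IsColimit.eq_iff' (isColimitLocalCohomology M) _ _).mp h'
    have hts : t ≤ s.unop.unop := g.unop.unop.down.down
    refine ⟨_, hts, (extLinearEquiv (A := A) (projectiveResolution _) i).map_eq_zero_iff.mp ?_⟩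
    rw [extLinearEquiv_mk₀_comp (A := A) (projectiveResolution _) i]
    exact (hg.trans (map_zero ((D.map g).app M).hom) :)
  · rw [← toLocalCohomology_mk₀_comp hts, h, map_zero]

variable (I i) in
/-- The annihilator of the `i`-th local cohomology module of `M` with respect to `I`. -/
abbrev localCohomologyAnnihilator (M : Type u) [AddCommGroup M] [Module A M] : Ideal A :=
  Module.annihilator A ((localCohomology I i).obj (ModuleCat.of A M))

section Annihilator

variable {M M' M'' : Type u} [AddCommGroup M] [Module A M] [AddCommGroup M'] [Module A M']
  [AddCommGroup M''] [Module A M'']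

lemma mem_localCohomologyAnnihilator_iff {a : A} :
    a ∈ localCohomologyAnnihilator I i M ↔
      ∀ (t : ℕ) (e : Abelian.Ext (ModuleCat.of A (A ⧸ I ^ t)) (ModuleCat.of A M) i),
        ∃ (s : ℕ) (hts : t ≤ s),
          a • (Abelian.Ext.mk₀ (quotientPowProj I hts)).comp e (zero_add i) = 0 := by
  simp_rw [← Abelian.Ext.comp_smul, ← toLocalCohomology_eq_zero_iff, map_smul]
  refine Module.mem_annihilator.trans ⟨fun h t e => h _, fun h x => ?_⟩
  obtain ⟨t, e, rfl⟩ := exists_toLocalCohomology_eq x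
  exact h t e

lemma quotientPowProj_comp {s t r : ℕ} (hst : t ≤ s) (hrs : s ≤ r) :
    quotientPowProj I hrs ≫ quotientPowProj I hst = quotientPowProj I (hst.trans hrs) := by
  ext
  rfl

lemma localCohomologyAnnihilator_mul_le {f : M' →ₗ[A] M} {g : M →ₗ[A] M''}
    (hf : Function.Injective f) (hg : Function.Surjective g) (hfg : Function.Exact f g) :
    localCohomologyAnnihilator I i M * localCohomologyAnnihilator I (i + 1) M' ≤
      localCohomologyAnnihilator I i M'' := by
  refine Ideal.mul_le.mpr fun a ha b hb => mem_localCohomologyAnnihilator_iff.mpr fun t e => ?_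
  let S : ShortComplex (ModuleCat.{u} A) :=
    ShortComplex.mk (ModuleCat.ofHom f) (ModuleCat.ofHom g)
      (by ext x; exact hfg.apply_apply_eq_zero x)
  have hS : S.ShortExact := ModuleCat.shortComplex_shortExact S hfg hf hg
  obtain ⟨s, hts, hs⟩ := mem_localCohomologyAnnihilator_iff.mp hb t (e.comp hS.extClass rfl)
  let e' := b • (Abelian.Ext.mk₀ (quotientPowProj I hts)).comp e (zero_add i)
  have connecting_eq_zero : e'.comp hS.extClass rfl = 0 := by
    rw [Abelian.Ext.smul_comp, Abelian.Ext.comp_assoc _ _ _ _ rfl (by lia), hs]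
  obtain ⟨d, hd⟩ := Abelian.Ext.covariant_sequence_exact₃ _ hS e' rfl connecting_eq_zero
  obtain ⟨r, hsr, hr⟩ := mem_localCohomologyAnnihilator_iff.mp ha s d
  refine ⟨r, hts.trans hsr, ?_⟩
  calc (a * b) • (Abelian.Ext.mk₀ (quotientPowProj I (hts.trans hsr))).comp e (zero_add i)
      = a • (Abelian.Ext.mk₀ (quotientPowProj I hsr)).comp e' (zero_add i) := by
        rw [Abelian.Ext.comp_smul, smul_smul, Abelian.Ext.mk₀_comp_mk₀_assoc,
          quotientPowProj_comp]
    _ = 0 := by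
        rw [← hd, ← Abelian.Ext.comp_assoc_of_third_deg_zero, ← Abelian.Ext.smul_comp, hr,
          Abelian.Ext.zero_comp]

lemma le_radical_localCohomologyAnnihilator_of_exact {f : M' →ₗ[A] M} {g : M →ₗ[A] M''}
    (hf : Function.Injective f) (hg : Function.Surjective g) (hfg : Function.Exact f g)
    (hM : I ≤ (localCohomologyAnnihilator I i M).radical)
    (hM' : I ≤ (localCohomologyAnnihilator I (i + 1) M').radical) :
    I ≤ (localCohomologyAnnihilator I i M'').radical := by
  refine (le_inf hM hM').trans ?_
  rw [← Ideal.radical_mul]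
  exact Ideal.radical_mono (localCohomologyAnnihilator_mul_le hf hg hfg)

lemma annihilator_le_localCohomologyAnnihilator :
    Module.annihilator A M ≤ localCohomologyAnnihilator I i M := by
  refine fun a ha => mem_localCohomologyAnnihilator_iff.mpr fun t e => ⟨t, le_rfl, ?_⟩
  have : a • 𝟙 (ModuleCat.of A M) = 0 := by
    ext m
    exact Module.mem_annihilator.mp ha m
  rw [Abelian.Ext.smul_eq_comp_mk₀, this, Abelian.Ext.mk₀_zero, Abelian.Ext.comp_zero]

lemma localCohomologyAnnihilator_zero :
    localCohomologyAnnihilator I 0 M = Module.annihilator A (powTorsion I M) := by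
  ext a
  rw [mem_localCohomologyAnnihilator_iff, Module.mem_annihilator]
  refine ⟨fun h ⟨m, hm⟩ => ?_, fun h t e => ?_⟩
  · obtain ⟨t, ht⟩ := mem_powTorsion_iff.mp hm
    let f : (A ⧸ I ^ t) →ₗ[A] M := (I ^ t).liftQ (LinearMap.toSpanSingleton A M m) ht
    obtain ⟨s, hts, hs⟩ := h t (Abelian.Ext.mk₀ (ModuleCat.ofHom f))
    rw [Abelian.Ext.mk₀_comp_mk₀, ← Abelian.Ext.mk₀_smul, Abelian.Ext.mk₀_eq_zero_iff] at hs
    have h1 := ConcreteCategory.congr_hom hs (Ideal.Quotient.mk (I ^ s) 1)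
    have f_one : f (Ideal.Quotient.mk (I ^ t) 1) = m := one_smul A m
    exact Subtype.ext (f_one ▸ h1 : a • m = 0)
  · obtain ⟨f, rfl⟩ := (Abelian.Ext.mk₀_bijective _ _).surjective e
    refine ⟨t, le_rfl, ?_⟩
    rw [Abelian.Ext.mk₀_comp_mk₀, ← Abelian.Ext.mk₀_smul, Abelian.Ext.mk₀_eq_zero_iff]
    ext
    have mem : f.hom (Ideal.Quotient.mk (I ^ t) 1) ∈ powTorsion I M :=
      mem_powTorsion_iff.mpr ⟨t, fun b hb => by
        rw [← map_smul, Module.mem_annihilator.mp (Ideal.annihilator_quotient.ge hb), map_zero]⟩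
    exact congrArg Subtype.val (h ⟨_, mem⟩)

lemma powTorsion_localCohomology (M : ModuleCat.{u} A) :
    powTorsion I ((localCohomology I i).obj M) = ⊤ := by
  refine eq_top_iff.mpr fun x _ => mem_powTorsion_iff.mpr ?_
  obtain ⟨t, e, rfl⟩ := exists_toLocalCohomology_eq x
  refine ⟨t, fun a ha => ?_⟩
  have smul_id : a • 𝟙 (ModuleCat.of A (A ⧸ I ^ t)) = 0 :=
    ModuleCat.hom_ext <| LinearMap.ext <|
      Module.mem_annihilator.mp (Ideal.annihilator_quotient.ge ha)
  have smul_e : a • e = 0 := by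
    rw [← Abelian.Ext.mk₀_id_comp e, ← Abelian.Ext.smul_comp, ← Abelian.Ext.mk₀_smul, smul_id,
      Abelian.Ext.mk₀_zero, Abelian.Ext.zero_comp]
  rw [← map_smul, smul_e, map_zero]

lemma le_radical_localCohomologyAnnihilator_of_finite [IsNoetherianRing A]
    [Module.Finite A ((localCohomology I i).obj (ModuleCat.of A M))] :
    I ≤ (localCohomologyAnnihilator I i M).radical :=
  le_radical_annihilator_of_powTorsion_eq_top (powTorsion_localCohomology _)

lemma le_radical_localCohomologyAnnihilator_of_le_powTorsion [IsNoetherian A M]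
    {N : Submodule A M} (hN : N ≤ powTorsion I M) :
    I ≤ (localCohomologyAnnihilator I i N).radical :=
  le_radical_annihilator_powTorsion.trans <| Ideal.radical_mono <|
    (LinearMap.annihilator_le_of_injective _ (Submodule.inclusion_injective hN)).trans
      annihilator_le_localCohomologyAnnihilator

lemma le_radical_localCohomologyAnnihilator_quotient [IsNoetherian A M]
    {N : Submodule A M} (hN : N ≤ powTorsion I M)
    (hM : I ≤ (localCohomologyAnnihilator I i M).radical) :
    I ≤ (localCohomologyAnnihilator I i (M ⧸ N)).radical :=
  le_radical_localCohomologyAnnihilator_of_exact N.injective_subtype N.mkQ_surjective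
    (LinearMap.exact_subtype_mkQ N) hM
    (le_radical_localCohomologyAnnihilator_of_le_powTorsion hN)

open scoped Pointwise in
lemma le_radical_localCohomologyAnnihilator_quotSMulTop [IsNoetherian A M] {y : A}
    (hy : Submodule.torsionBy A M y ≤ powTorsion I M)
    (hM : I ≤ (localCohomologyAnnihilator I i M).radical)
    (hM' : I ≤ (localCohomologyAnnihilator I (i + 1) M).radical) :
    I ≤ (localCohomologyAnnihilator I i (QuotSMulTop y M)).radical := by
  let f : (M ⧸ Submodule.torsionBy A M y) →ₗ[A] M :=
    (Submodule.torsionBy A M y).liftQ (DistribSMul.toLinearMap A M y) le_rfl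
  have range_f : LinearMap.range f = y • ⊤ :=
    (Submodule.range_liftQ _ _ _).trans (Submodule.map_top _).symm
  exact le_radical_localCohomologyAnnihilator_of_exact
    (LinearMap.ker_eq_bot.mp (Submodule.ker_liftQ_eq_bot' _ _ rfl)) (Submodule.mkQ_surjective _)
    (LinearMap.exact_iff.mpr ((Submodule.ker_mkQ _).trans range_f.symm)) hM
    (le_radical_localCohomologyAnnihilator_quotient hy hM')

end Annihilator

end LocalCohomology

section AssociatedPrimes

variable {A : Type*} [CommRing A] {I J p q : Ideal A}
  {M : Type*} [AddCommGroup M] [Module A M]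

lemma annihilator_le_of_mem_associatedPrimes (hp : p ∈ associatedPrimes A M) :
    Module.annihilator A M ≤ p :=
  Submodule.annihilator_top.ge.trans (IsAssociatedPrime.annihilator_le hp)

lemma mem_torsionBySet_of_isSMulRegular {S : Set A} {y : A} {m : M} (hy : IsSMulRegular M y)
    (hm : y • m ∈ Submodule.torsionBySet A M S) : m ∈ Submodule.torsionBySet A M S := by
  refine (Submodule.mem_torsionBySet_iff _ _).mpr fun a => hy.right_eq_zero_of_smul ?_
  rw [smul_comm]
  exact (Submodule.mem_torsionBySet_iff _ _).mp hm a

lemma quotSMulTop_mk_eq_zero_iff {y : A} {m : M} :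
    (Submodule.Quotient.mk m : QuotSMulTop y M) = 0 ↔ ∃ n : M, y • n = m := by
  simp [Submodule.Quotient.mk_eq_zero, Submodule.mem_smul_pointwise_iff_exists]

lemma injective_map_torsionBySet {S : Set A} {y : A} (hy : IsSMulRegular M y) :
    Function.Injective (QuotSMulTop.map y (Submodule.torsionBySet A M S).subtype) := by
  refine (injective_iff_map_eq_zero _).mpr fun u hu => ?_
  obtain ⟨⟨v, hv⟩, rfl⟩ := Submodule.mkQ_surjective _ u
  obtain ⟨m, rfl⟩ := quotSMulTop_mk_eq_zero_iff.mp hu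
  exact quotSMulTop_mk_eq_zero_iff.mpr ⟨⟨m, mem_torsionBySet_of_isSMulRegular hy hv⟩, rfl⟩

lemma mem_minimalPrimes_sup_span_singleton_pow {y : A} {n : ℕ} (hn : n ≠ 0)
    (hq : q ∈ (J ⊔ Ideal.span {y}).minimalPrimes) :
    q ∈ (J ⊔ Ideal.span {y ^ n}).minimalPrimes := by
  rwa [← Ideal.radical_minimalPrimes, Ideal.radical_sup, ← Ideal.span_singleton_pow,
    Ideal.radical_pow _ hn, ← Ideal.radical_sup, Ideal.radical_minimalPrimes]

variable [IsNoetherianRing A]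

lemma notMem_of_isSMulRegular_of_mem_associatedPrimes {y : A} (hy : IsSMulRegular M y)
    (hp : p ∈ associatedPrimes A M) : y ∉ p := fun hyp =>
  (biUnion_associatedPrimes_eq_compl_regular A M).subset (Set.mem_biUnion hp hyp) hy

lemma exists_isSMulRegular_of_powTorsion_eq_bot [Module.Finite A M] (h : powTorsion I M = ⊥) :
    ∃ y ∈ I, IsSMulRegular M y := by
  have hom_eq_zero (f : (A ⧸ I) →ₗ[A] M) : f = 0 := by
    refine LinearMap.ext fun u => (Submodule.mem_bot A).mp (h ▸ mem_powTorsion_iff.mpr ⟨1, ?_⟩)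
    intro a ha
    rw [pow_one] at ha
    rw [← map_smul, Module.mem_annihilator.mp (Ideal.annihilator_quotient.ge ha), map_zero]
  have : Subsingleton ((A ⧸ I) →ₗ[A] M) := subsingleton_of_forall_eq 0 hom_eq_zero
  obtain ⟨y, hy, reg⟩ := IsSMulRegular.subsingleton_linearMap_iff.mp this
  exact ⟨y, Ideal.annihilator_quotient.le hy, reg⟩

lemma not_le_of_mem_associatedPrimes_of_powTorsion_eq_bot [Module.Finite A M]
    (h : powTorsion I M = ⊥) (hp : p ∈ associatedPrimes A M) : ¬ I ≤ p := fun hI => by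
  obtain ⟨y, hyI, hy⟩ := exists_isSMulRegular_of_powTorsion_eq_bot h
  exact notMem_of_isSMulRegular_of_mem_associatedPrimes hy hp (hI hyI)

lemma mem_associatedPrimes_quotient_powTorsion [Module.Finite A M]
    (hp : p ∈ associatedPrimes A M) (hI : ¬ I ≤ p) :
    p ∈ associatedPrimes A (M ⧸ powTorsion I M) := by
  refine (associatedPrimes.subset_union_of_exact (powTorsion I M).injective_subtype
    (LinearMap.exact_subtype_mkQ _) hp).resolve_left fun hp' => hI ?_
  exact le_radical_annihilator_powTorsion.trans
    (hp.isPrime.radical_le_iff.mpr (annihilator_le_of_mem_associatedPrimes hp'))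

lemma annihilator_torsionBySet_of_mem_associatedPrimes (hp : p ∈ associatedPrimes A M) :
    Module.annihilator A (Submodule.torsionBySet A M p) = p := by
  refine le_antisymm (fun a ha => ?_) fun a ha => ?_
  · obtain ⟨-, x, rfl⟩ := isAssociatedPrime_iff.mp hp
    have hx : x ∈ Submodule.torsionBySet A M (Submodule.colon ⊥ {x} : Ideal A) :=
      (Submodule.mem_torsionBySet_iff _ _).mpr fun b => Submodule.mem_colon_singleton.mp b.2
    exact Submodule.mem_colon_singleton.mpr
      (congrArg Subtype.val (Module.mem_annihilator.mp ha ⟨x, hx⟩))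
  · exact Module.mem_annihilator.mpr fun m =>
      Subtype.ext ((Submodule.mem_torsionBySet_iff _ _).mp m.2 ⟨a, ha⟩)

lemma mem_associatedPrimes_quotSMulTop_torsionBySet [Module.Finite A M] {y : A}
    (hp : p ∈ associatedPrimes A M) (hq : q ∈ (p ⊔ Ideal.span {y}).minimalPrimes) :
    q ∈ associatedPrimes A (QuotSMulTop y (Submodule.torsionBySet A M p)) := by
  have h := Module.support_quotSMulTop (M := Submodule.torsionBySet A M p) y
  rw [Module.support_eq_zeroLocus, Module.support_eq_zeroLocus,
    annihilator_torsionBySet_of_mem_associatedPrimes hp, ← PrimeSpectrum.zeroLocus_span {y},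
    ← PrimeSpectrum.zeroLocus_sup, PrimeSpectrum.zeroLocus_eq_iff] at h
  apply Module.associatedPrimes.minimalPrimes_annihilator_subset_associatedPrimes
  rwa [← Ideal.radical_minimalPrimes, h, Ideal.radical_minimalPrimes]

lemma mem_associatedPrimes_quotSMulTop [Module.Finite A M] {y : A}
    (hp : p ∈ associatedPrimes A M) (hy : IsSMulRegular M y)
    (hq : q ∈ (p ⊔ Ideal.span {y}).minimalPrimes) : q ∈ associatedPrimes A (QuotSMulTop y M) :=
  associatedPrimes.subset_of_injective (injective_map_torsionBySet hy)
    (mem_associatedPrimes_quotSMulTop_torsionBySet hp hq)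

lemma exists_notMem_mul_span_le_radical (hq : q ∈ J.minimalPrimes) :
    ∃ s ∉ q, q * Ideal.span {s} ≤ J.radical := by
  classical
  have := hq.1.1
  let F := J.finite_minimalPrimes_of_isNoetherianRing.toFinset.erase q
  have prod_not_le : ¬ ∏ P ∈ F, P ≤ q := fun h => by
    obtain ⟨P, hP, hPq⟩ := Ideal.IsPrime.prod_le ‹_› |>.mp h
    simp only [F, Finset.mem_erase, Set.Finite.mem_toFinset] at hP
    exact hP.1 (hPq.antisymm (hq.2 hP.2.1 hPq))
  obtain ⟨s, hs, hsq⟩ := SetLike.not_le_iff_exists.mp prod_not_le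
  refine ⟨s, hsq, ?_⟩
  rw [← Ideal.sInf_minimalPrimes]
  refine le_sInf fun P hP => ?_
  by_cases hPq : P = q
  · exact hPq ▸ Ideal.mul_le_left
  · have hPF : P ∈ F := by simp [F, hPq, hP]
    have hsP : s ∈ P := (Ideal.prod_le_inf.trans (Finset.inf_le (f := id) hPF)) hs
    exact Ideal.mul_le_right.trans ((Ideal.span_singleton_le_iff_mem P).mpr hsP)

lemma exists_notMem_pow_mul_span_le (hq : q ∈ J.minimalPrimes) :
    ∃ s ∉ q, ∃ n : ℕ, q ^ n * Ideal.span {s} ≤ J := by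
  have := hq.1.1
  obtain ⟨s, hsq, hs⟩ := exists_notMem_mul_span_le_radical hq
  obtain ⟨n, hn⟩ := Ideal.exists_pow_le_of_le_radical_of_fg hs (IsNoetherian.noetherian _)
  refine ⟨s ^ n, fun h => hsq (‹q.IsPrime›.mem_of_pow_mem n h), n, ?_⟩
  rwa [← Ideal.span_singleton_pow, ← mul_pow]

end AssociatedPrimes

section PrimeChains

universe u

variable {A : Type u} [CommRing A] {I : Ideal A} {M : Type u} [AddCommGroup M] [Module A M]

lemma mem_minimalPrimes_of_le_radical {J K q : Ideal A} (hq : q ∈ J.minimalPrimes)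
    (hJK : J ≤ K.radical) (hKq : K ≤ q) : q ∈ K.minimalPrimes := by
  rw [← Ideal.radical_minimalPrimes]
  exact ⟨⟨hq.1.1, hq.1.1.radical_le_iff.mpr hKq⟩,
    fun P hP hPq => hq.2 ⟨hP.1, hJK.trans hP.2⟩ hPq⟩

open scoped Pointwise in
lemma mem_annihilator_powTorsion_quotSMulTop {b z : A} (hM : powTorsion I M = ⊥)
    (hb : b ∈ localCohomologyAnnihilator I 1 M) (hz : IsSMulRegular M z) :
    b ∈ Module.annihilator A (powTorsion I (QuotSMulTop z M)) := by
  have h0 : localCohomologyAnnihilator I 0 M = ⊤ := by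
    rw [localCohomologyAnnihilator_zero, hM]
    exact Submodule.annihilator_bot
  let f : M →ₗ[A] M := DistribSMul.toLinearMap A M z
  have exact_smul : Function.Exact f (Submodule.mkQ (z • ⊤ : Submodule A M)) :=
    LinearMap.exact_iff.mpr ((Submodule.ker_mkQ _).trans (Submodule.map_top f))
  rw [← localCohomologyAnnihilator_zero]
  refine localCohomologyAnnihilator_mul_le (f := f) hz (Submodule.mkQ_surjective _)
    exact_smul ?_
  rw [h0, Ideal.top_mul]
  exact hb

variable [IsNoetherianRing A]

lemma length_le_ncard_of_last_mem_minimalPrimes {S : Set A} (hS : S.Finite)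
    (s : LTSeries (PrimeSpectrum A))
    (hs : s.last.asIdeal ∈ (Ideal.span S ⊔ s.head.asIdeal).minimalPrimes) :
    s.length ≤ S.ncard := by
  let π := Ideal.Quotient.mk s.head.asIdeal
  let e := s.head.asIdeal.primeSpectrumQuotientOrderIsoZeroLocus
  let t : LTSeries (PrimeSpectrum.zeroLocus (s.head.asIdeal : Set A)) :=
    ⟨s.length, fun i => ⟨s i, s.head_le i⟩, s.step⟩
  have last_mem : (e.symm t.last).asIdeal ∈ (Ideal.span (π '' S)).minimalPrimes := by
    rw [← Ideal.map_span, Ideal.minimalPrimes_map_of_surjective Ideal.Quotient.mk_surjective,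
      Ideal.mk_ker]
    exact ⟨_, hs, rfl⟩
  have : (s.length : ℕ∞) ≤ S.ncard :=
    calc (s.length : ℕ∞) ≤ Order.height t.last := Order.length_le_height_last (p := t)
      _ = (e.symm t.last).asIdeal.height := by
        rw [PrimeSpectrum.height_eq_orderHeight, Order.height_orderIso]
      _ ≤ (π '' S).ncard := Ideal.height_le_card_of_mem_minimalPrimes_span (hS.image π) last_mem
      _ ≤ S.ncard := by exact_mod_cast Set.ncard_image_le hS
  exact_mod_cast this

-- If `I ≤ q`, some `s ∉ q` maps `T := (0 :_M p)` into the `I`-power torsion modulo `y ^ (n + 1) M`.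
-- That torsion is annihilated by `y ^ n`, so `s T ⊆ y M ∩ T = y T`, although `q` is an associated
-- prime of `T / y T`.
lemma not_le_of_mem_minimalPrimes_sup_span {p q : Ideal A} {y : A} [Module.Finite A M]
    (hM : powTorsion I M = ⊥) (hM1 : I ≤ (localCohomologyAnnihilator I 1 M).radical)
    (hp : p ∈ associatedPrimes A M) (hyI : y ∈ I) (hy : IsSMulRegular M y)
    (hq : q ∈ (p ⊔ Ideal.span {y}).minimalPrimes) : ¬ I ≤ q := by
  intro hI
  obtain ⟨n, hn⟩ := hM1 hyI
  obtain ⟨s, hsq, k, hsk⟩ := exists_notMem_pow_mul_span_le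
    (mem_minimalPrimes_sup_span_singleton_pow n.succ_ne_zero hq)
  have mk_smul_mem (v : Submodule.torsionBySet A M p) :
      (Submodule.Quotient.mk (s • (v : M)) : QuotSMulTop (y ^ (n + 1)) M) ∈ powTorsion I _ := by
    refine mem_powTorsion_iff.mpr ⟨k, fun a ha => ?_⟩
    obtain ⟨b, hb, c, hc, hbc⟩ := Submodule.mem_sup.mp <|
      hsk (Ideal.mul_mem_mul (Ideal.pow_right_mono hI k ha) (Ideal.mem_span_singleton_self s))
    obtain ⟨c, rfl⟩ := Ideal.mem_span_singleton.mp hc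
    have hbv : b • (v : M) = 0 := (Submodule.mem_torsionBySet_iff _ _).mp v.2 ⟨b, hb⟩
    refine quotSMulTop_mk_eq_zero_iff.mpr ⟨c • (v : M), ?_⟩
    change y ^ (n + 1) • c • (v : M) = a • s • (v : M)
    rw [smul_smul, smul_smul, ← hbc, add_smul, hbv, zero_add]
  have exists_smul_eq (v : Submodule.torsionBySet A M p) : ∃ m : M, y • m = s • (v : M) := by
    have h := Module.mem_annihilator.mp
      (mem_annihilator_powTorsion_quotSMulTop hM hn (hy.pow (n + 1))) ⟨_, mk_smul_mem v⟩
    obtain ⟨m, hm⟩ := quotSMulTop_mk_eq_zero_iff.mp (congrArg Subtype.val h)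
    refine ⟨m, hy.pow n ?_⟩
    rwa [pow_succ, mul_smul] at hm
  refine hsq (annihilator_le_of_mem_associatedPrimes
    (mem_associatedPrimes_quotSMulTop_torsionBySet hp hq) (Module.mem_annihilator.mpr fun u => ?_))
  obtain ⟨v, rfl⟩ := Submodule.mkQ_surjective _ u
  obtain ⟨m, hm⟩ := exists_smul_eq v
  have hmT : m ∈ Submodule.torsionBySet A M p :=
    mem_torsionBySet_of_isSMulRegular hy (hm ▸ Submodule.smul_mem _ s v.2)
  exact quotSMulTop_mk_eq_zero_iff.mpr ⟨⟨m, hmT⟩, Subtype.ext hm⟩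

lemma exists_lt_mem_associatedPrimes_quotSMulTop [Module.Finite A M]
    {p q : PrimeSpectrum A} {y : A} (hM : powTorsion I M = ⊥)
    (hM1 : I ≤ (localCohomologyAnnihilator I 1 M).radical)
    (hp : p.asIdeal ∈ associatedPrimes A M) (hyI : y ∈ I) (hy : IsSMulRegular M y)
    (hq : q.asIdeal ∈ (I ⊔ p.asIdeal).minimalPrimes) :
    ∃ p' : PrimeSpectrum A, p < p' ∧ p'.asIdeal ∈ associatedPrimes A (QuotSMulTop y M) ∧
      ¬ I ≤ p'.asIdeal ∧ q.asIdeal ∈ (I ⊔ p'.asIdeal).minimalPrimes := by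
  have hpyq : p.asIdeal ⊔ Ideal.span {y} ≤ q.asIdeal :=
    sup_le (le_sup_right.trans hq.1.2)
      ((Ideal.span_singleton_le_iff_mem _).mpr (hq.1.2 (Ideal.mem_sup_left hyI)))
  obtain ⟨p', hp', hp'q⟩ := Ideal.exists_minimalPrimes_le hpyq
  have hpp' : p.asIdeal ≤ p' := le_sup_left.trans hp'.1.2
  have hyp' : y ∈ p' := hp'.1.2 (Ideal.mem_sup_right (Ideal.mem_span_singleton_self y))
  have hyp : y ∉ p.asIdeal := notMem_of_isSMulRegular_of_mem_associatedPrimes hy hp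
  exact ⟨⟨p', hp'.1.1⟩, lt_of_le_not_ge hpp' fun h => hyp (h hyp'),
    mem_associatedPrimes_quotSMulTop hp hy hp',
    not_le_of_mem_minimalPrimes_sup_span hM hM1 hp hyI hy hp',
    mem_minimalPrimes_of_le_radical hq ((sup_le_sup_left hpp' I).trans Ideal.le_radical)
      (sup_le (le_sup_left.trans hq.1.2) hp'q)⟩

lemma exists_ltSeries_lt_length (r : ℕ) {M : Type u} [AddCommGroup M] [Module A M]
    [Module.Finite A M] (hM : ∀ i ≤ r, I ≤ (localCohomologyAnnihilator I i M).radical)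
    {p q : PrimeSpectrum A} (hp : p.asIdeal ∈ associatedPrimes A M) (hI : ¬ I ≤ p.asIdeal)
    (hq : q.asIdeal ∈ (I ⊔ p.asIdeal).minimalPrimes) :
    ∃ s : LTSeries (PrimeSpectrum A), s.head = p ∧ s.last = q ∧ r < s.length := by
  induction r generalizing M p with
  | zero =>
    have hpq : p < q := lt_of_le_of_ne (le_sup_right.trans hq.1.2) fun h =>
      hI (h ▸ le_sup_left.trans hq.1.2)
    exact ⟨(RelSeries.singleton _ q).cons p hpq, rfl, RelSeries.last_cons .., Nat.zero_lt_one⟩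
  | succ r ih =>
    let N := M ⧸ powTorsion I M
    have hN (i : ℕ) (hi : i ≤ r + 1) : I ≤ (localCohomologyAnnihilator I i N).radical :=
      le_radical_localCohomologyAnnihilator_quotient le_rfl (hM i hi)
    have torsion_eq_bot : powTorsion I N = ⊥ := powTorsion_quotient_powTorsion
    obtain ⟨y, hyI, hy⟩ := exists_isSMulRegular_of_powTorsion_eq_bot torsion_eq_bot
    obtain ⟨p', hpp', hp', hIp', hqp'⟩ := exists_lt_mem_associatedPrimes_quotSMulTop torsion_eq_bot
      (hN 1 (by lia)) (mem_associatedPrimes_quotient_powTorsion hp hI) hyI hy hq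
    have hy' : Submodule.torsionBy A N y ≤ powTorsion I N :=
      (LinearMap.ker_eq_bot (f := DistribSMul.toLinearMap A N y)).mpr hy |>.trans_le bot_le
    obtain ⟨s, rfl, hs, hrs⟩ := ih (fun i hi => le_radical_localCohomologyAnnihilator_quotSMulTop
      hy' (hN i (by lia)) (hN (i + 1) (by lia))) hp' hIp' hqp'
    exact ⟨s.cons p hpp', by simp, by simpa using hs, by simpa using hrs⟩

end PrimeChains

section RelativeSystems

variable {I p : Ideal R} {M N : Type} [AddCommGroup M] [Module R M] [AddCommGroup N] [Module R N]
  {r : ℕ}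

lemma isRsop_iff {x : Fin r → R} : IsRsop I M x ↔
    (∀ j, x j ∈ I) ∧ I ≤ (Ideal.span (Set.range x) ⊔ Module.annihilator R M).radical := by
  refine and_congr_right fun hxI => ⟨fun h => ?_, fun h => le_antisymm ?_ ?_⟩
  · exact (le_sup_left.trans Ideal.le_radical).trans h.ge
  · exact Ideal.radical_mono (sup_le_sup_right (Ideal.span_le.mpr (Set.range_subset_iff.mpr hxI)) _)
  · exact Ideal.radical_le_radical_iff.mpr (sup_le h (le_sup_right.trans Ideal.le_radical))

lemma IsRsop.of_surjective {x : Fin r → R} (hx : IsRsop I M x) {f : M →ₗ[R] N}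
    (hf : Function.Surjective f) : IsRsop I N x :=
  isRsop_iff.mpr ⟨hx.1, (isRsop_iff.mp hx).2.trans <| Ideal.radical_mono <|
    sup_le_sup_left (LinearMap.annihilator_le_of_surjective f hf) _⟩

lemma IsRsop.comp_perm {x : Fin r → R} (hx : IsRsop I M x) (σ : Equiv.Perm (Fin r)) :
    IsRsop I M (x ∘ σ) :=
  ⟨fun j => hx.1 (σ j), by rw [σ.surjective.range_comp, hx.2]⟩

lemma IsRsop.tail_quotSMulTop {x : Fin (r + 1) → R} (hx : IsRsop I M x) :
    IsRsop I (QuotSMulTop (x 0) M) (Fin.tail x) := by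
  refine isRsop_iff.mpr ⟨fun j => hx.1 j.succ, (isRsop_iff.mp hx).2.trans <|
    Ideal.radical_mono (sup_le (Ideal.span_le.mpr (Set.range_subset_iff.mpr fun j => ?_)) ?_)⟩
  · cases j using Fin.cases with
    | zero => exact Ideal.mem_sup_right (QuotSMulTop.mem_annihilator M _)
    | succ j => exact Ideal.mem_sup_left (Ideal.subset_span ⟨j, rfl⟩)
  · exact le_sup_of_le_right
      (LinearMap.annihilator_le_of_surjective _ (Submodule.mkQ_surjective _))

lemma pSpan_zero {x : Fin (r + 1) → R} : pSpan M x 0 = ⊥ := by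
  simp [pSpan]

open scoped Pointwise in
lemma mem_pSpan_succ_iff {x : Fin (r + 1) → R} {j : Fin r} {m : M} :
    m ∈ pSpan M x j.succ ↔
      (Submodule.Quotient.mk m : QuotSMulTop (x 0) M) ∈
        pSpan (QuotSMulTop (x 0) M) (Fin.tail x) j := by
  have image_succ : x '' {k | k < j.succ} = {x 0} ∪ Fin.tail x '' {k | k < j} := by
    ext a
    simp [Fin.exists_fin_succ, Fin.tail, eq_comm]
  have tail_span : pSpan (QuotSMulTop (x 0) M) (Fin.tail x) j =
      (Ideal.span (Fin.tail x '' {k | k < j}) • (⊤ : Submodule R M)).map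
        (Submodule.mkQ (x 0 • ⊤)) := by
    rw [Submodule.map_smul'', Submodule.map_top, Submodule.range_mkQ]
    rfl
  have comap_span : pSpan M x j.succ =
      (pSpan (QuotSMulTop (x 0) M) (Fin.tail x) j).comap (Submodule.mkQ (x 0 • ⊤)) := by
    rw [tail_span, Submodule.comap_map_mkQ, pSpan, image_succ, Ideal.span_union,
      Submodule.sup_smul, Submodule.ideal_span_singleton_smul]
  exact comap_span ▸ Iff.rfl

variable [IsNoetherianRing R]

lemma notMem_of_mem_associatedPrimes_of_isRsop [Module.Finite R M] {x : Fin (r + 1) → R}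
    (hI : I ≤ (⊥ : Ideal R).jacobson)
    (hM : ∀ i ≤ r, I ≤ (localCohomologyAnnihilator I i M).radical) (hx : IsRsop I M x)
    (hp : p ∈ associatedPrimes R M) (hIp : ¬ I ≤ p) (j : Fin (r + 1)) : x j ∉ p := by
  intro hxp
  obtain ⟨𝔪, h𝔪, hp𝔪⟩ := p.exists_le_maximal hp.isPrime.ne_top
  have hI𝔪 : I ≤ 𝔪 := hI.trans (Ideal.jacobson_bot.trans_le (Ring.jacobson_le_of_isMaximal 𝔪))
  obtain ⟨q, hq, -⟩ := Ideal.exists_minimalPrimes_le (sup_le hI𝔪 hp𝔪)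
  obtain ⟨s, hsp, hsq, hrs⟩ := exists_ltSeries_lt_length r hM (p := ⟨p, hp.isPrime⟩)
    (q := ⟨q, hq.1.1⟩) hp hIp hq
  let S : Set R := Set.range (x ∘ j.succAbove)
  have range_subset : ∀ k, x k ∈ Ideal.span S ⊔ p := (Fin.forall_iff_succAbove j).mpr
    ⟨Ideal.mem_sup_right hxp, fun k => Ideal.mem_sup_left (Ideal.subset_span ⟨k, rfl⟩)⟩
  have le_radical : I ⊔ p ≤ (Ideal.span S ⊔ p).radical := by
    refine sup_le ((isRsop_iff.mp hx).2.trans (Ideal.radical_mono (sup_le ?_ ?_)))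
      (le_sup_right.trans Ideal.le_radical)
    · exact Ideal.span_le.mpr (Set.range_subset_iff.mpr range_subset)
    · exact le_sup_of_le_right (annihilator_le_of_mem_associatedPrimes hp)
  have hSI : Ideal.span S ≤ I := Ideal.span_le.mpr (Set.range_subset_iff.mpr fun k => hx.1 _)
  have hq' : q ∈ (Ideal.span S ⊔ p).minimalPrimes :=
    mem_minimalPrimes_of_le_radical hq le_radical ((sup_le_sup_right hSI p).trans hq.1.2)
  have length_le : s.length ≤ S.ncard :=
    length_le_ncard_of_last_mem_minimalPrimes (Set.finite_range _) s (by rwa [hsp, hsq])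
  have ncard_le : S.ncard ≤ r := by
    simpa [S, Function.comp_def] using Set.ncard_image_le (f := x ∘ j.succAbove) Set.finite_univ
  lia

lemma torsionBy_le_powTorsion_of_isRsop [Module.Finite R M] {x : Fin (r + 1) → R}
    (hI : I ≤ (⊥ : Ideal R).jacobson)
    (hM : ∀ i ≤ r, I ≤ (localCohomologyAnnihilator I i M).radical) (hx : IsRsop I M x)
    (j : Fin (r + 1)) : Submodule.torsionBy R M (x j) ≤ powTorsion I M := by
  intro m hm
  by_contra hmI
  have mk_ne_zero : (powTorsion I M).mkQ m ≠ 0 := (Submodule.Quotient.mk_eq_zero _).not.mpr hmI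
  obtain ⟨p, hp, hmp⟩ := exists_le_isAssociatedPrime_of_isNoetherianRing R _ mk_ne_zero
  refine notMem_of_mem_associatedPrimes_of_isRsop hI
    (fun i hi => le_radical_localCohomologyAnnihilator_quotient le_rfl (hM i hi))
    (hx.of_surjective (Submodule.mkQ_surjective _)) hp
    (not_le_of_mem_associatedPrimes_of_powTorsion_eq_bot powTorsion_quotient_powTorsion hp) j
    (hmp (Submodule.mem_colon_singleton.mpr ?_))
  rw [← map_smul, (Submodule.mem_torsionBy_iff _ _).mp hm, map_zero]
  exact Submodule.zero_mem _

lemma isFilterRegSeq_of_isRsop (hI : I ≤ (⊥ : Ideal R).jacobson) (r : ℕ) {M : Type}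
    [AddCommGroup M] [Module R M] [Module.Finite R M] {x : Fin r → R}
    (hM : ∀ i < r, I ≤ (localCohomologyAnnihilator I i M).radical) (hx : IsRsop I M x) :
    IsFilterRegSeq I M x := by
  induction r generalizing M with
  | zero => exact fun i => i.elim0
  | succ r ih =>
    have torsionBy_le : Submodule.torsionBy R M (x 0) ≤ powTorsion I M :=
      torsionBy_le_powTorsion_of_isRsop hI (fun i hi => hM i (by lia)) hx 0
    intro i m hm
    cases i using Fin.cases with
    | zero =>
      rw [pSpan_zero] at hm ⊢
      exact mem_powTorsion_iff.mp (torsionBy_le hm)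
    | succ j =>
      have tail_filterReg : IsFilterRegSeq I (QuotSMulTop (x 0) M) (Fin.tail x) :=
        ih (fun i hi => le_radical_localCohomologyAnnihilator_quotSMulTop torsionBy_le
          (hM i (by lia)) (hM (i + 1) (by lia))) hx.tail_quotSMulTop
      obtain ⟨t, ht⟩ := tail_filterReg j (Submodule.Quotient.mk m) (mem_pSpan_succ_iff.mp hm)
      exact ⟨t, fun a ha => mem_pSpan_succ_iff.mpr (ht a ha)⟩

end RelativeSystems

theorem IsCd.unique {I : Ideal R} {M : Type} [AddCommGroup M] [Module R M] {c d : ℕ}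
    (hc : IsCd I M c) (hd : IsCd I M d) : c = d := by
  rcases lt_trichotomy c d with h | h | h
  · exact (not_subsingleton_iff_nontrivial.mpr hd.1 (hc.2 d h)).elim
  · exact h
  · exact (not_subsingleton_iff_nontrivial.mpr hc.1 (hd.2 c h)).elim

theorem IsRelGCM.finite_locH {I : Ideal R} {M : Type} [AddCommGroup M] [Module R M]
    (hM : IsRelGCM I M) {c i : ℕ} (hc : IsCd I M c) (hi : i < c) :
    Module.Finite R (locH I i M) := by
  rcases hM with h | ⟨d, hd, hfin⟩
  · exact (not_subsingleton_iff_nontrivial.mpr hc.1 (h c (by lia))).elim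
  · exact hfin.1 i (hi.trans_eq (hc.unique hd))

theorem theorem_3_3_i_general [IsNoetherianRing R] {I : Ideal R}
    (hjac : I ≤ (⊥ : Ideal R).jacobson) {M : Type} [AddCommGroup M] [Module R M]
    [Module.Finite R M] {r : ℕ} (hM : ∀ i < r, Module.Finite R (locH I i M))
    {x : Fin r → R} (hx : IsRsop I M x) : IsUncondFilterRegSeq I M x := by
  intro σ
  refine isFilterRegSeq_of_isRsop hjac r (fun i hi => ?_) (hx.comp_perm σ)
  have := hM i hi
  exact le_radical_localCohomologyAnnihilator_of_finite

/-- **Theorem 3.3(i).** Suppose `I` is contained in the Jacobson radical of `R` and `M` is an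
`I`-relative generalized Cohen-Macaulay module with `c := cd(I,M) = ara(I,M)`. If
`x₁, …, x_c` is an `I`-relative system of parameters of `M`, then `x₁, …, x_c` is an
unconditioned `I`-filter regular sequence on `M`. -/
theorem theorem_3_3_i [IsNoetherianRing R] (I : Ideal R) (hjac : I ≤ (⊥ : Ideal R).jacobson)
    (M : Type) [AddCommGroup M] [Module R M] [Module.Finite R M]
    (hgcm : IsRelGCM I M) (c : ℕ) (hc : IsCd I M c) (ha : IsAra I M c)
    (x : Fin c → R) (hx : IsRsop I M x) :
    IsUncondFilterRegSeq I M x :=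
  theorem_3_3_i_general hjac (fun _ => hgcm.finite_locH hc) hx
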